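/- For every n ≥ 1, the identity of polynomials 2^n A_{n+1}(z) = z · Σ_{k=0}^{n} C(n,k) B_k(z) B_{n−k}(z) holds, where C(n,k) is the binomial coefficient and B_0(z) = 1. -/

import Mathlib

open Finset Polynomial

/-- The word `π_1 π_2 ⋯ π_n` of a permutation of `[n] = {1,…,n}`, as a function `ℕ → ℤ`,
with the convention that positions outside `{1,…,n}` (in particular position `0`) get value `0`. -/
def permWord (n : ℕ) (σ : Equiv.Perm (Fin n)) : ℕ → ℤ := fun i =>
  if h : 1 ≤ i ∧ i ≤ n then ((σ ⟨i - 1, by omega⟩ : ℕ) : ℤ) + 1 else 0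

/-- A word changes direction at index `i`. -/
def changesDir (w : ℕ → ℤ) (i : ℕ) : Prop :=
  (w (i - 1) < w i ∧ w (i + 1) < w i) ∨ (w i < w (i - 1) ∧ w i < w (i + 1))

instance (w : ℕ → ℤ) : DecidablePred (changesDir w) := fun i => by
  unfold changesDir; infer_instance

/-- The number of alternating runs of a permutation of `[n]`:
one plus the number of indices `i ∈ {2,…,n-1}` where the word changes direction. -/
def runA (n : ℕ) (σ : Equiv.Perm (Fin n)) : ℕ :=
  1 + ((Finset.Icc 2 (n - 1)).filter (changesDir (permWord n σ))).card

/-- The run polynomial `R_n(x) = ∑_{σ ∈ S_n} x^{run σ}`. -/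
noncomputable def runPoly (n : ℕ) : Polynomial ℤ :=
  ∑ σ : Equiv.Perm (Fin n), X ^ runA n σ

/-- `altChain w b l` holds if the values of `w` along the index list `l` alternate,
starting with a strict descent if `b = true` (resp. ascent if `b = false`). -/
def altChain (w : ℕ → ℤ) : Bool → List ℕ → Prop
  | _, [] => True
  | _, [_] => True
  | b, i :: j :: rest => (if b then w j < w i else w i < w j) ∧ altChain w (!b) (j :: rest)

/-- `las n σ` : the maximum length of an alternating subsequence
`σ_{i₁} > σ_{i₂} < σ_{i₃} > ⋯` (indices strictly increasing) of `σ`. -/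
noncomputable def las (n : ℕ) (σ : Equiv.Perm (Fin n)) : ℕ :=
  sSup {k | ∃ l : List ℕ, l.length = k ∧ l.Chain' (· < ·) ∧
    (∀ i ∈ l, 1 ≤ i ∧ i ≤ n) ∧ altChain (permWord n σ) true l}

/-- The set of peaks of a permutation: indices `i ∈ {2,…,n-1}` with `σ_{i-1} < σ_i > σ_{i+1}`. -/
def peakSet (n : ℕ) (σ : Equiv.Perm (Fin n)) : Finset ℕ :=
  (Finset.Icc 2 (n - 1)).filter fun i =>
    permWord n σ (i - 1) < permWord n σ i ∧ permWord n σ (i + 1) < permWord n σ i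

/-- The set of valleys of a permutation: indices `i ∈ {2,…,n-1}` with `σ_{i-1} > σ_i < σ_{i+1}`. -/
def valleySet (n : ℕ) (σ : Equiv.Perm (Fin n)) : Finset ℕ :=
  (Finset.Icc 2 (n - 1)).filter fun i =>
    permWord n σ i < permWord n σ (i - 1) ∧ permWord n σ i < permWord n σ (i + 1)

/-- The set of left peaks of a permutation: indices `i ∈ {1,…,n-1}` with
`σ_{i-1} < σ_i > σ_{i+1}`, with the convention `σ_0 = 0`. -/
def leftPeakSet (n : ℕ) (σ : Equiv.Perm (Fin n)) : Finset ℕ :=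
  (Finset.Icc 1 (n - 1)).filter fun i =>
    permWord n σ (i - 1) < permWord n σ i ∧ permWord n σ (i + 1) < permWord n σ i

/-- The number of descents of a permutation of `[n]`. -/
def desA (n : ℕ) (σ : Equiv.Perm (Fin n)) : ℕ :=
  ((Finset.Icc 1 (n - 1)).filter fun i => permWord n σ (i + 1) < permWord n σ i).card

/-- The maximum letter (as a natural number, `0` for the empty word) of `w₂`, the longest
suffix of `w_1 ⋯ w_{i-1}` all of whose letters exceed `w i`. -/
def w2Max (w : ℕ → ℤ) (i : ℕ) : ℕ :=
  ((Finset.Ico 1 i).filter fun j => ∀ t ∈ Finset.Ico j i, w i < w t).sup fun j => (w j).toNat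

/-- The maximum letter (as a natural number, `0` for the empty word) of `w₄`, the longest
prefix of `w_{i+1} ⋯ w_n` all of whose letters exceed `w i`. -/
def w4Max (n : ℕ) (w : ℕ → ℤ) (i : ℕ) : ℕ :=
  ((Finset.Ioc i n).filter fun j => ∀ t ∈ Finset.Ioc i j, w i < w t).sup fun j => (w j).toNat

/-- André permutation of `[n]`: no double descent, no final descent, and for every
`i ∈ {2,…,n-1}`, in the `π_i`-factorization the maximum letter of `w₂` is smaller than the
maximum letter of `w₄` (maximum of the empty word being `0`). -/
def IsAndre (n : ℕ) (σ : Equiv.Perm (Fin n)) : Prop :=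
  (∀ i ∈ Finset.Icc 2 (n - 1),
      ¬(permWord n σ i < permWord n σ (i - 1) ∧ permWord n σ (i + 1) < permWord n σ i)) ∧
  permWord n σ (n - 1) < permWord n σ n ∧
  ∀ i ∈ Finset.Icc 2 (n - 1), w2Max (permWord n σ) i < w4Max n (permWord n σ) i

/-- `d_{n,i}` : the number of André permutations of `[n]` with exactly `i` descents. -/
noncomputable def andreCount (n i : ℕ) : ℕ :=
  Nat.card {σ : Equiv.Perm (Fin n) // IsAndre n σ ∧ desA n σ = i}

/-- A signed permutation of length `n`: a permutation of `[n]` together with a sign for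
each position. -/
abbrev SignedPerm (n : ℕ) := Equiv.Perm (Fin n) × (Fin n → Bool)

/-- The word `π_1 π_2 ⋯ π_n` of a signed permutation, as a function `ℕ → ℤ`, with the
convention that positions outside `{1,…,n}` (in particular position `0`) get value `0`. -/
def signedWord (n : ℕ) (π : SignedPerm n) : ℕ → ℤ := fun i =>
  if h : 1 ≤ i ∧ i ≤ n then
    (if π.2 ⟨i - 1, by omega⟩ then -(((π.1 ⟨i - 1, by omega⟩ : ℕ) : ℤ) + 1)
      else ((π.1 ⟨i - 1, by omega⟩ : ℕ) : ℤ) + 1)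
  else 0

/-- `run_B` : one plus the number of indices `i ∈ {1,…,n-1}` where the word
`0 π_1 ⋯ π_n` changes direction. -/
def runB (n : ℕ) (π : SignedPerm n) : ℕ :=
  1 + ((Finset.Icc 1 (n - 1)).filter (changesDir (signedWord n π))).card

/-- `des_B` : the number of indices `i ∈ {0,…,n-1}` with `π_i > π_{i+1}`, where `π_0 = 0`. -/
def desB (n : ℕ) (π : SignedPerm n) : ℕ :=
  ((Finset.range n).filter fun i => signedWord n π (i + 1) < signedWord n π i).card

/-- The set of valleys of a signed permutation: indices `i ∈ {1,…,n-1}` with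
`π_{i-1} > π_i < π_{i+1}`, with the convention `π_0 = 0`. -/
def valleysB (n : ℕ) (π : SignedPerm n) : Finset ℕ :=
  (Finset.Icc 1 (n - 1)).filter fun i =>
    signedWord n π i < signedWord n π (i - 1) ∧ signedWord n π i < signedWord n π (i + 1)

/-- The maximum letter of `w₂` (as an element of `WithBot ℤ`, empty word giving `⊥ = -∞`). -/
def w2MaxB (w : ℕ → ℤ) (i : ℕ) : WithBot ℤ :=
  ((Finset.Ico 1 i).filter fun j => ∀ t ∈ Finset.Ico j i, w i < w t).sup fun j =>
    (w j : WithBot ℤ)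

/-- The maximum letter of `w₄` (as an element of `WithBot ℤ`, empty word giving `⊥ = -∞`). -/
def w4MaxB (n : ℕ) (w : ℕ → ℤ) (i : ℕ) : WithBot ℤ :=
  ((Finset.Ioc i n).filter fun j => ∀ t ∈ Finset.Ioc i j, w i < w t).sup fun j =>
    (w j : WithBot ℤ)

/-- Type B André permutation: no double descent, no final descent, and for every valley `i`,
in the `π_i`-factorization the maximum letter of `w₂` is smaller than the maximum letter of
`w₄` (maximum of the empty word being `-∞`). -/
def IsAndreB (n : ℕ) (π : SignedPerm n) : Prop :=
  (∀ i ∈ Finset.Icc 1 (n - 1),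
      ¬(signedWord n π i < signedWord n π (i - 1) ∧ signedWord n π (i + 1) < signedWord n π i)) ∧
  signedWord n π (n - 1) < signedWord n π n ∧
  ∀ i ∈ valleysB n π, w2MaxB (signedWord n π) i < w4MaxB n (signedWord n π) i

/-- The number of negative letters of a signed permutation. -/
def negCount (n : ℕ) (π : SignedPerm n) : ℕ :=
  (Finset.univ.filter fun i => π.2 i = true).card

/-- `R_n^{B,>}(x)`. -/
noncomputable def runPolyBgt (n : ℕ) : Polynomial ℤ :=
  ∑ π : SignedPerm n, if 0 < signedWord n π 1 then X ^ runB n π else 0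

/-- `R_n^{B,<}(x)`. -/
noncomputable def runPolyBlt (n : ℕ) : Polynomial ℤ :=
  ∑ π : SignedPerm n, if signedWord n π 1 < 0 then X ^ runB n π else 0

/-- `R_n^{B}(x)`. -/
noncomputable def runPolyB (n : ℕ) : Polynomial ℤ :=
  ∑ π : SignedPerm n, X ^ runB n π

/-- `R_n^{D,>}(x)`. -/
noncomputable def runPolyDgt (n : ℕ) : Polynomial ℤ :=
  ∑ π : SignedPerm n, if Even (negCount n π) ∧ 0 < signedWord n π 1 then X ^ runB n π else 0

/-- `R_n^{D,<}(x)`. -/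
noncomputable def runPolyDlt (n : ℕ) : Polynomial ℤ :=
  ∑ π : SignedPerm n, if Even (negCount n π) ∧ signedWord n π 1 < 0 then X ^ runB n π else 0

/-- `R_n^{D}(x)`. -/
noncomputable def runPolyD (n : ℕ) : Polynomial ℤ :=
  ∑ π : SignedPerm n, if Even (negCount n π) then X ^ runB n π else 0

/-- The Eulerian polynomial `A_n(x) = ∑_{σ ∈ S_n} x^{des(σ)+1}`. -/
noncomputable def eulerianA (n : ℕ) : Polynomial ℤ :=
  ∑ σ : Equiv.Perm (Fin n), X ^ (desA n σ + 1)

/-- The type B Eulerian polynomial `B_n(x) = ∑_{π ∈ 𝔅_n} x^{des_B(π)}`. -/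
noncomputable def eulerianB (n : ℕ) : Polynomial ℤ :=
  ∑ π : SignedPerm n, X ^ desB n π

/-- `b̄_{n,k}` : the number of type B André permutations of length `n` with `des_B` equal
to `k`. -/
noncomputable def andreBCountDes (n k : ℕ) : ℕ :=
  Nat.card {π : SignedPerm n // IsAndreB n π ∧ desB n π = k}

/-- `b̂_{n,j}` : the number of type B André permutations of length `n` with exactly `j`
valleys. -/
noncomputable def andreBCountVal (n j : ℕ) : ℕ :=
  Nat.card {π : SignedPerm n // IsAndreB n π ∧ (valleysB n π).card = j}

/-- `d̃_{n,k}` : the number of type D André permutations of length `n` (type B André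
permutations with an even number of negative letters) with exactly `k` valleys. -/
noncomputable def andreDCountVal (n k : ℕ) : ℕ :=
  Nat.card {π : SignedPerm n //
    IsAndreB n π ∧ Even (negCount n π) ∧ (valleysB n π).card = k}

/-- The number of permutations of `[n]` with exactly `j` left peaks. -/
noncomputable def leftPeakCount (n j : ℕ) : ℕ :=
  Nat.card {σ : Equiv.Perm (Fin n) // (leftPeakSet n σ).card = j}

/-- `R_n` evaluated at a real number. -/
noncomputable def runPolyReal (n : ℕ) (x : ℝ) : ℝ :=
  ∑ σ : Equiv.Perm (Fin n), x ^ runA n σ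

/-- `A_n` evaluated at a real number. -/
noncomputable def eulerianAReal (n : ℕ) (x : ℝ) : ℝ :=
  ∑ σ : Equiv.Perm (Fin n), x ^ (desA n σ + 1)

/-- `R_n^{B,>}` evaluated at a real number. -/
noncomputable def runPolyBgtReal (n : ℕ) (x : ℝ) : ℝ :=
  ∑ π : SignedPerm n, if 0 < signedWord n π 1 then x ^ runB n π else 0

/-- `B_n` evaluated at a real number. -/
noncomputable def eulerianBReal (n : ℕ) (x : ℝ) : ℝ :=
  ∑ π : SignedPerm n, x ^ desB n π

/-!
Write `B_n(x; a, b) = ∑_π a^{pos π} b^{neg π} x^{des_B π}`, the sum being over signed permutations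
with `pos π` positive and `neg π` negative letters; then `A_n(x) = x B_n(x; 1, 0)` and
`B_n(x) = B_n(x; 1, 1)`. Inserting the letter `±(n + 1)` into a word of length `n` creates no
descent at the `des_B π` positions inside a descent and one descent at the `n - des_B π` positions
inside an ascent, while at the end it creates one exactly when the letter is negative. Hence
`B_{n+1} = (a + b x + n (a + b) x) B_n + (a + b) x (1 - x) B_n'`.
By the Leibniz rule, the binomial convolution of `B_k(x; a, b)` and `B_k(x; b, a)` satisfies a
recurrence of the same shape, in which `a` and `b` enter only through `a + b`; it is also the
recurrence of `(a + b)^n B_{n+1}(x; 1, 0)`.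
-/

section Words

variable {α : Type*}

/-- The word `w 0, …, w p, v, w (p + 1), …`: the letter `v` is inserted right after index `p`. -/
def insertLetter (w : ℕ → α) (p : ℕ) (v : α) (i : ℕ) : α :=
  if i ≤ p then w i else if i = p + 1 then v else w (i - 1)

lemma insertLetter_of_le (w : ℕ → α) (v : α) {p i : ℕ} (h : i ≤ p) :
    insertLetter w p v i = w i :=
  if_pos h

lemma insertLetter_self_succ (w : ℕ → α) (p : ℕ) (v : α) : insertLetter w p v (p + 1) = v := by
  simp [insertLetter]

lemma insertLetter_succ_of_lt (w : ℕ → α) (v : α) {p i : ℕ} (h : p < i) :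
    insertLetter w p v (i + 1) = w i := by
  simp [insertLetter, h.ne', (Nat.lt_succ_of_lt h).not_ge]

variable [Preorder α] [DecidableLT α]

/-- The number of descents of the word `w 0, …, w n`, so that `des_B` is the number of descents of
`signedWord`; here `n` counts the adjacent pairs, not the letters. -/
def numDescents (w : ℕ → α) (n : ℕ) : ℕ :=
  #{i ∈ range n | w (i + 1) < w i}

lemma numDescents_succ (w : ℕ → α) (n : ℕ) :
    numDescents w (n + 1) = numDescents w n + if w (n + 1) < w n then 1 else 0 := by
  simp only [numDescents, card_filter, sum_range_succ]

lemma numDescents_congr {w w' : ℕ → α} {n : ℕ} (h : ∀ i ≤ n, w i = w' i) :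
    numDescents w n = numDescents w' n := by
  unfold numDescents
  congr 1
  refine filter_congr fun i hi => ?_
  rw [mem_range] at hi
  rw [h i hi.le, h (i + 1) hi]

lemma numDescents_insertLetter_end (w : ℕ → α) (n : ℕ) (v : α) :
    numDescents (insertLetter w n v) (n + 1) =
      numDescents w n + if v < w n then 1 else 0 := by
  rw [numDescents_succ, numDescents_congr fun i hi => insertLetter_of_le w v hi,
    insertLetter_self_succ, insertLetter_of_le w v le_rfl]

lemma numDescents_insertLetter_of_lt (w : ℕ → α) (v : α) {p n : ℕ} (h : p < n) :
    numDescents (insertLetter w p v) (n + 1) + (if w (p + 1) < w p then 1 else 0) =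
      numDescents w n + (if v < w p then 1 else 0) + (if w (p + 1) < v then 1 else 0) := by
  induction n, h using Nat.le_induction with
  | base =>
    rw [numDescents_succ, numDescents_insertLetter_end, insertLetter_self_succ,
      insertLetter_succ_of_lt w v p.lt_succ_self, numDescents_succ]
    ring
  | succ n hpn ih =>
    rw [numDescents_succ, numDescents_succ w, insertLetter_succ_of_lt w v hpn,
      insertLetter_succ_of_lt w v (Nat.lt_succ_of_lt hpn)]
    linarith

lemma numDescents_insertLetter_of_extremal (w : ℕ → α) {v : α} {p n : ℕ} (h : p < n)
    (hv : (w p < v ∧ w (p + 1) < v) ∨ (v < w p ∧ v < w (p + 1))) :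
    numDescents (insertLetter w p v) (n + 1) =
      numDescents w n + if w (p + 1) < w p then 0 else 1 := by
  have balance := numDescents_insertLetter_of_lt w v h
  rcases hv with ⟨hp, hp'⟩ | ⟨hp, hp'⟩
  · rw [if_neg hp.not_gt, if_pos hp'] at balance
    split_ifs at balance ⊢ <;> omega
  · rw [if_pos hp, if_neg hp'.not_gt] at balance
    split_ifs at balance ⊢ <;> omega

end Words

section SignedPermutations

variable {n : ℕ}

/-- The permutation whose word is obtained from that of `σ` by inserting the new largest letter
at position `p`, counted from `0`. -/
def insertMax (p : Fin (n + 1)) (σ : Equiv.Perm (Fin n)) : Equiv.Perm (Fin (n + 1)) :=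
  (finSuccEquiv' p).trans (σ.optionCongr.trans finSuccEquivLast.symm)

lemma insertMax_self (p : Fin (n + 1)) (σ : Equiv.Perm (Fin n)) :
    insertMax p σ p = Fin.last n := by
  simp [insertMax]

lemma insertMax_succAbove (p : Fin (n + 1)) (σ : Equiv.Perm (Fin n)) (i : Fin n) :
    insertMax p σ (p.succAbove i) = (σ i).castSucc := by
  simp [insertMax]

lemma insertMax_inj {p q : Fin (n + 1)} {σ τ : Equiv.Perm (Fin n)} :
    insertMax p σ = insertMax q τ ↔ p = q ∧ σ = τ := by
  refine ⟨fun h => ?_, by rintro ⟨rfl, rfl⟩; rfl⟩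
  obtain rfl : p = q :=
    (insertMax q τ).injective (by rw [← h, insertMax_self, h, insertMax_self])
  refine ⟨rfl, Equiv.ext fun i => Fin.castSucc_injective n ?_⟩
  rw [← insertMax_succAbove p σ, h, insertMax_succAbove]

/-- The signed permutation whose word is obtained from that of `π` by inserting at position `p`
the letter `-(n + 1)` if `s = true` and `n + 1` if `s = false`. -/
def insertSignedMax (s : Bool) (p : Fin (n + 1)) (π : SignedPerm n) : SignedPerm (n + 1) :=
  (insertMax p π.1, p.insertNth s π.2)

lemma insertSignedMax_bijective :
    Function.Bijective fun x : SignedPerm n × Bool × Fin (n + 1) =>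
      insertSignedMax x.2.1 x.2.2 x.1 := by
  rw [Fintype.bijective_iff_injective_and_card]
  constructor
  · rintro ⟨⟨σ, ε⟩, s, p⟩ ⟨⟨τ, δ⟩, t, q⟩ h
    obtain ⟨hperm, hsign⟩ := Prod.mk.inj h
    obtain ⟨rfl, rfl⟩ := insertMax_inj.mp hperm
    obtain ⟨rfl, rfl⟩ := Fin.insertNth_inj.mp hsign
    rfl
  · simp only [Fintype.card_prod, Fintype.card_perm, Fintype.card_fin, Fintype.card_fun,
      Fintype.card_bool, Nat.factorial_succ, pow_succ]
    ring

/-- The letter of absolute value `k + 1`, negative if `s = true`, matching the encoding of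
`SignedPerm` by elements of `Fin n` and Boolean signs. -/
def signedLetter (s : Bool) (k : ℕ) : ℤ :=
  if s then -((k : ℤ) + 1) else k + 1

lemma signedWord_zero (π : SignedPerm n) : signedWord n π 0 = 0 := by
  simp [signedWord]

lemma signedWord_succ (π : SignedPerm n) (i : Fin n) :
    signedWord n π (i + 1) = signedLetter (π.2 i) (π.1 i) := by
  simp [signedWord, signedLetter, Nat.succ_le_of_lt i.isLt]

lemma signedWord_of_gt (π : SignedPerm n) {i : ℕ} (h : n < i) : signedWord n π i = 0 := by
  simp [signedWord, h.not_ge]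

lemma abs_signedLetter (s : Bool) (k : ℕ) : |signedLetter s k| = k + 1 := by
  have hk : (0 : ℤ) ≤ k + 1 := by positivity
  cases s <;> simp [signedLetter, -neg_add_rev, abs_neg, abs_of_nonneg hk]

lemma abs_signedWord_le (π : SignedPerm n) (i : ℕ) : |signedWord n π i| ≤ n := by
  rcases i with _ | i
  · simp [signedWord_zero]
  · obtain h | h := lt_or_ge i n
    · rw [signedWord_succ π ⟨i, h⟩, abs_signedLetter]
      exact_mod_cast (π.1 ⟨i, h⟩).isLt
    · simp [signedWord_of_gt π (Nat.lt_succ_of_le h)]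

lemma signedWord_insertSignedMax (s : Bool) (p : Fin (n + 1)) (π : SignedPerm n) :
    signedWord (n + 1) (insertSignedMax s p π) =
      insertLetter (signedWord n π) p (signedLetter s n) := by
  ext i
  rcases i with _ | i
  · rw [insertLetter_of_le _ _ p.val.zero_le, signedWord_zero, signedWord_zero]
  obtain hi | hi := le_or_gt (n + 1) i
  · rw [signedWord_of_gt _ (by omega), insertLetter_succ_of_lt _ _ (by omega),
      signedWord_of_gt _ (by omega)]
  lift i to Fin (n + 1) using hi
  rw [signedWord_succ]
  obtain rfl | ⟨j, rfl⟩ := p.eq_self_or_eq_succAbove i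
  · simp [insertLetter_self_succ, insertSignedMax, insertMax_self]
  · have letter_eq : signedLetter ((insertSignedMax s p π).2 (p.succAbove j))
        ((insertSignedMax s p π).1 (p.succAbove j)) = signedWord n π (j + 1) := by
      simp [signedWord_succ, insertSignedMax, insertMax_succAbove]
    rw [letter_eq]
    obtain hj | hj := lt_or_ge j.castSucc p
    · rw [Fin.succAbove_of_castSucc_lt p j hj, insertLetter_of_le _ _ hj, Fin.val_castSucc]
    · rw [Fin.succAbove_of_le_castSucc p j hj, insertLetter_succ_of_lt _ _, Fin.val_succ]
      exact Nat.lt_succ_of_le hj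

lemma desB_eq_numDescents (π : SignedPerm n) : desB n π = numDescents (signedWord n π) n :=
  rfl

lemma desB_insertSignedMax_castSucc (s : Bool) (p : Fin n) (π : SignedPerm n) :
    desB (n + 1) (insertSignedMax s p.castSucc π) =
      desB n π + if signedWord n π (p + 1) < signedWord n π p then 0 else 1 := by
  rw [desB_eq_numDescents, signedWord_insertSignedMax, Fin.val_castSucc]
  refine numDescents_insertLetter_of_extremal _ p.isLt ?_
  have hp := abs_le.mp (abs_signedWord_le π p)
  have hp' := abs_le.mp (abs_signedWord_le π (p + 1))
  cases s <;> simp only [signedLetter, if_true, Bool.false_eq_true, if_false] <;> omega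

lemma desB_insertSignedMax_last (s : Bool) (π : SignedPerm n) :
    desB (n + 1) (insertSignedMax s (Fin.last n) π) = desB n π + if s then 1 else 0 := by
  rw [desB_eq_numDescents, signedWord_insertSignedMax, Fin.val_last,
    numDescents_insertLetter_end, desB_eq_numDescents]
  have hn := abs_le.mp (abs_signedWord_le π n)
  cases s <;> simp only [signedLetter, if_true, Bool.false_eq_true, if_false] <;>
    split_ifs <;> omega

lemma permWord_eq_signedWord (σ : Equiv.Perm (Fin n)) :
    permWord n σ = signedWord n (σ, fun _ => false) := by
  ext i
  simp [permWord, signedWord]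

lemma permWord_nonneg (σ : Equiv.Perm (Fin n)) (i : ℕ) : 0 ≤ permWord n σ i := by
  unfold permWord
  split_ifs <;> positivity

lemma desA_eq_desB (σ : Equiv.Perm (Fin n)) :
    desA n σ = desB n (σ, fun _ => false) := by
  have not_descent_zero : ¬permWord n σ (0 + 1) < permWord n σ 0 := by
    rw [permWord_eq_signedWord, signedWord_zero, ← permWord_eq_signedWord]
    exact (permWord_nonneg σ _).not_gt
  unfold desA desB
  rw [← permWord_eq_signedWord]
  congr 1
  ext i
  rcases i with _ | i
  · simp only [mem_filter, not_descent_zero, and_false]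
  · simp only [mem_filter, mem_Icc, mem_range]
    omega

end SignedPermutations

section SignedEulerian

variable {R : Type*} [CommSemiring R]

/-- The Eulerian polynomial `∑_π a^{pos π} b^{neg π} x^{des_B π}` of type B in which each positive
letter has weight `a` and each negative letter has weight `b`; it interpolates between the types
A (`a = 1`, `b = 0`) and B (`a = b = 1`). -/
noncomputable def signedEulerian (a b : R) (n : ℕ) : R[X] :=
  ∑ π : SignedPerm n, C (∏ i, if π.2 i then b else a) * X ^ desB n π

lemma signedEulerian_zero (a b : R) : signedEulerian a b 0 = 1 := by
  simp [signedEulerian, desB]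

lemma prod_sign_insertSignedMax {n : ℕ} (a b : R) (s : Bool) (p : Fin (n + 1))
    (π : SignedPerm n) :
    (∏ i, if (insertSignedMax s p π).2 i then b else a) =
      (if s then b else a) * ∏ i, if π.2 i then b else a := by
  simp [insertSignedMax, Fin.prod_univ_succAbove _ p]

lemma signedEulerian_one_one (n : ℕ) : signedEulerian 1 1 n = eulerianB n := by
  simp [signedEulerian, eulerianB]

lemma map_eulerianA (R : Type*) [CommRing R] (n : ℕ) :
    (eulerianA n).map (Int.castRingHom R) = X * signedEulerian 1 0 n := by
  simp only [eulerianA, signedEulerian, Polynomial.map_sum, Polynomial.map_pow, map_X,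
    Fintype.sum_prod_type, mul_sum]
  refine sum_congr rfl fun σ _ => ?_
  rw [sum_eq_single fun _ => false]
  · simp [desA_eq_desB, pow_succ']
  · intro ε _ hε
    obtain ⟨i, hi⟩ : ∃ i, ε i = true := by simpa [funext_iff] using hε
    have weight_eq_zero : (∏ i, if ε i then (0 : R) else 1) = 0 :=
      prod_eq_zero (mem_univ i) (if_pos hi)
    rw [weight_eq_zero, C_0, zero_mul, mul_zero]
  · simp

end SignedEulerian

section Recurrence

variable {R : Type*}

lemma X_mul_derivative_X_pow [CommSemiring R] (d : ℕ) :
    X * derivative (X ^ d : R[X]) = (d : R[X]) * X ^ d := by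
  cases d with
  | zero => simp
  | succ d =>
    rw [derivative_X_pow, Nat.add_sub_cancel, map_natCast]
    ring

variable [CommRing R]

lemma sum_X_pow_add_ite {ι : Type*} (d : ℕ) (s : Finset ι) (P : ι → Prop) [DecidablePred P] :
    ∑ i ∈ s, (X : R[X]) ^ (d + if P i then 0 else 1) =
      ((#{i ∈ s | P i} : R[X]) + ((#s : R[X]) - (#{i ∈ s | P i} : R[X])) * X) * X ^ d := by
  have hcard : (#{i ∈ s | P i} : R[X]) + #{i ∈ s | ¬P i} = #s := by
    rw [← Nat.cast_add, card_filter_add_card_filter_not]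
  simp only [apply_ite (fun k => (X : R[X]) ^ (d + k)), sum_ite, sum_const, nsmul_eq_mul,
    ← hcard]
  ring

lemma sum_X_pow_desB_insertSignedMax {n : ℕ} (s : Bool) (π : SignedPerm n) :
    ∑ p, (X : R[X]) ^ desB (n + 1) (insertSignedMax s p π) =
      ((if s then X else 1) + (n : R[X]) * X) * X ^ desB n π +
        X * (1 - X) * derivative (X ^ desB n π) := by
  have hlast : (X : R[X]) ^ (desB n π + if s then 1 else 0) =
      (if s then X else 1) * X ^ desB n π := by
    cases s <;> simp [pow_succ']
  simp only [Fin.sum_univ_castSucc, desB_insertSignedMax_castSucc, desB_insertSignedMax_last,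
    hlast]
  rw [Fin.sum_univ_eq_sum_range fun i => (X : R[X]) ^
      (desB n π + if signedWord n π (i + 1) < signedWord n π i then 0 else 1),
    sum_X_pow_add_ite, card_range, mul_right_comm, X_mul_derivative_X_pow]
  simp only [desB]
  ring

lemma signedEulerian_succ (a b : R) (n : ℕ) :
    signedEulerian a b (n + 1) =
      (C a + C b * X + (n : R[X]) * (C (a + b) * X)) * signedEulerian a b n +
        C (a + b) * (X * (1 - X)) * derivative (signedEulerian a b n) := by
  rw [signedEulerian, ← insertSignedMax_bijective.sum_comp, Fintype.sum_prod_type]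
  simp only [signedEulerian, derivative_sum, mul_sum, ← sum_add_distrib, derivative_C_mul]
  refine sum_congr rfl fun π _ => ?_
  simp only [Fintype.sum_prod_type, prod_sign_insertSignedMax, ← mul_sum,
    sum_X_pow_desB_insertSignedMax, Fintype.sum_bool, if_true, Bool.false_eq_true, if_false,
    C_mul, C_add]
  ring

end Recurrence

section Convolution

variable {R : Type*} [CommSemiring R]

/-- The binomial convolution `∑_{i + j = n} C(n, i) f_i g_j`, the coefficients of the product of
the exponential generating functions of `f` and `g`. -/
noncomputable def binomialConv (f g : ℕ → R[X]) (n : ℕ) : R[X] :=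
  ∑ ij ∈ antidiagonal n, (n.choose ij.1 : R[X]) * (f ij.1 * g ij.2)

lemma binomialConv_succ_of_recurrence {f g : ℕ → R[X]} {u v c e : R[X]}
    (hf : ∀ n, f (n + 1) = (u + (n : R[X]) * c) * f n + e * derivative (f n))
    (hg : ∀ n, g (n + 1) = (v + (n : R[X]) * c) * g n + e * derivative (g n)) (n : ℕ) :
    binomialConv f g (n + 1) =
      (u + v + (n : R[X]) * c) * binomialConv f g n + e * derivative (binomialConv f g n) := by
  simp only [binomialConv, sum_antidiagonal_choose_succ_mul fun i j => f i * g j,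
    ← sum_add_distrib, derivative_sum, mul_sum]
  refine sum_congr rfl fun ⟨i, j⟩ hij => ?_
  obtain rfl : i + j = n := mem_antidiagonal.mp hij
  simp only [← Nat.choose_symm_add, hf, hg, derivative_mul, derivative_natCast, Nat.cast_add]
  ring

end Convolution

lemma binomialConv_signedEulerian {R : Type*} [CommRing R] (a b : R) (n : ℕ) :
    binomialConv (signedEulerian a b) (signedEulerian b a) n =
      C (a + b) ^ n * signedEulerian 1 0 (n + 1) := by
  induction n with
  | zero => simp [binomialConv, signedEulerian_succ, signedEulerian_zero]
  | succ n ih =>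
    have hba (m : ℕ) : signedEulerian b a (m + 1) =
        (C b + C a * X + (m : R[X]) * (C (a + b) * X)) * signedEulerian b a m +
          C (a + b) * (X * (1 - X)) * derivative (signedEulerian b a m) := by
      rw [signedEulerian_succ, add_comm b a]
    rw [binomialConv_succ_of_recurrence (signedEulerian_succ a b) hba, ih,
      signedEulerian_succ 1 0 (n + 1), ← C_pow, derivative_C_mul]
    simp only [C_pow, C_add, C_0, C_1, Nat.cast_succ]
    ring

theorem statement17_general {R : Type*} [CommRing R] (a b : R) (n : ℕ) :
    C (a + b) ^ n * (eulerianA (n + 1)).map (Int.castRingHom R) =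
      X * ∑ k ∈ range (n + 1),
        (n.choose k : R[X]) * signedEulerian a b k * signedEulerian b a (n - k) := by
  rw [map_eulerianA, mul_left_comm, ← binomialConv_signedEulerian, binomialConv,
    Nat.sum_antidiagonal_eq_sum_range_succ_mk]
  simp only [mul_assoc]

/-- For `n ≥ 1`,
`2^n A_{n+1}(z) = z · Σ_{k=0}^{n} C(n,k) B_k(z) B_{n−k}(z)` as polynomials. -/
theorem statement17 (n : ℕ) (hn : 1 ≤ n) :
    (2 : Polynomial ℤ) ^ n * eulerianA (n + 1) =
      X * ∑ k ∈ Finset.range (n + 1),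
        (n.choose k : Polynomial ℤ) * eulerianB k * eulerianB (n - k) := by
  simpa [signedEulerian_one_one, one_add_one_eq_two] using statement17_general (1 : ℤ) 1 n
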